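/- For any two distinct sets X, Y ∈ 𝒳_2, the strict inclusion X ⊂ Y holds if and only if X ⊆ 1+4ℕ₀ and i(Y) < i(X). -/

import Mathlib

/-!
Suppose a power of `a` has the form `1 + p^K u` with `p ∤ u` and `K + 2 ≤ p K`, which means `K ≥ 1`,
and `K ≥ 2` if `p = 2`. Modulo `p^(n+K)` that power has order `p^n`, so its powers exhaust the `p^n`
classes congruent to `1` modulo `p^K`. Hence the closure of `a^ℕ` is the preimage of the powers of
`a` modulo `p^K`.

For odd `a ≠ 1` write `a = ε + 2^k u` with `ε = ±1`, `u` odd and `k ≥ 2`. Then `a²` is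
`1 + 2^(k+1)` times an odd number, so the closure of `a^ℕ` consists of the `y` congruent to `1` or
to `ε + 2^k` modulo `2^(k+1)`. A set of two residues modulo `2^(k+1)` has fewer than three images
modulo `2^n` for `n ≤ k + 1`, so `n(X)` lies beyond `k + 1`, where the index is constantly
`2^(k+1) / 4 = 2^(k-1)`. The inclusions are decided by which of these sets contain `ε + 2^k`.
-/

open TopologicalSpace

/-- The arithmetic progression `a + bℕ₀ = {a + b*n : n ≥ 0}` inside the positive integers. -/
def golombBasic (a b : ℕ) : Set ℕ+ := {x : ℕ+ | ∃ n : ℕ, (x : ℕ) = a + b * n}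

/-- The Golomb topology on the positive integers, generated by the arithmetic
progressions `a + bℕ₀` with coprime `a, b ∈ ℕ`. -/
instance golombTopology : TopologicalSpace ℕ+ :=
  generateFrom {S : Set ℕ+ | ∃ a b : ℕ, 0 < a ∧ 0 < b ∧ Nat.Coprime a b ∧ S = golombBasic a b}

/-- The positive integers not divisible by `p` (the set `ℕ \ pℕ`). -/
abbrev Np (p : ℕ) : Type := {x : ℕ+ // ¬ p ∣ (x : ℕ)}

/-- The `p`-adic topology on `ℕ \ pℕ`, generated by the traces of the sets
`x + p^nℕ₀`, `x, n ∈ ℕ`. -/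
def padicTop (p : ℕ) : TopologicalSpace (Np p) :=
  generateFrom {S : Set (Np p) | ∃ x n : ℕ, 0 < x ∧ 0 < n ∧
    S = {y : Np p | ∃ k : ℕ, ((y : ℕ+) : ℕ) = x + p ^ n * k}}

/-- Closure of a set of positive integers in the `p`-adic topology on `ℕ \ pℕ`,
viewed again as a set of positive integers. -/
def padicClosure (p : ℕ) (A : Set ℕ+) : Set ℕ+ :=
  Subtype.val '' (@closure (Np p) (padicTop p) (Subtype.val ⁻¹' A))

/-- `a^ℕ = {a^k : k ∈ ℕ}`, the set of positive powers of `a`. -/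
def powSet (a : ℕ) : Set ℕ+ := {y : ℕ+ | ∃ k : ℕ, 0 < k ∧ (y : ℕ) = a ^ k}

/-- The closure of `a^ℕ` in the `p`-adic topology on `ℕ \ pℕ`. -/
def clPow (p a : ℕ) : Set ℕ+ := padicClosure p (powSet a)

/-- The family `𝒳_p` of closures of the sets `a^ℕ` for `a ∈ ℕ \ pℕ`, `a ≠ 1`. -/
def XX (p : ℕ) : Set (Set ℕ+) := {X | ∃ a : ℕ, 0 < a ∧ a ≠ 1 ∧ ¬ p ∣ a ∧ X = clPow p a}

/-- The projection `π_n(X)` of a set of positive integers to `ℤ/p^nℤ`. -/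
def pin (p n : ℕ) (X : Set ℕ+) : Set (ZMod (p ^ n)) :=
  (fun y : ℕ+ => ((y : ℕ) : ZMod (p ^ n))) '' X

/-- `n(X)`: the least `n ∈ ℕ` with `X = ℕ ∩ π_n⁻¹(π_n(X))` and `|π_n(X)| ≥ max(p,3)`. -/
noncomputable def nX (p : ℕ) (X : Set ℕ+) : ℕ :=
  sInf {n : ℕ | 0 < n ∧ X = {y : ℕ+ | ((y : ℕ) : ZMod (p ^ n)) ∈ pin p n X} ∧
    max p 3 ≤ (pin p n X).ncard}

/-- `i(X)`: the index of the subgroup `π_{n(X)}(X)` in the group of units of `ℤ/p^{n(X)}ℤ`. -/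
noncomputable def iX (p : ℕ) (X : Set ℕ+) : ℕ :=
  Nat.card ((ZMod (p ^ nX p X))ˣ) / (pin p (nX p X) X).ncard

open Filter

section Closure

variable {p : ℕ}

lemma padicTop_nhds_hasBasis (y : Np p) :
    (@nhds _ (padicTop p) y).HasBasis (fun _ : ℕ => True)
      fun n => {z : Np p | ∃ k : ℕ, ((z : ℕ+) : ℕ) = (y : ℕ+) + p ^ n * k} := by
  have hanti : Antitone fun n => {z : Np p | ∃ k : ℕ, ((z : ℕ+) : ℕ) = (y : ℕ+) + p ^ n * k} := by
    rintro m n hmn z ⟨k, hk⟩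
    exact ⟨p ^ (n - m) * k, by rw [hk, ← mul_assoc, ← pow_add, Nat.add_sub_cancel' hmn]⟩
  suffices h : @nhds _ (padicTop p) y =
      ⨅ n : ℕ, 𝓟 {z : Np p | ∃ k : ℕ, ((z : ℕ+) : ℕ) = (y : ℕ+) + p ^ n * k} by
    rw [h]
    exact hasBasis_iInf_principal hanti.directed_ge
  refine le_antisymm (le_iInf fun n => ?_) ?_
  · refine le_principal_iff.2 (mem_of_superset ?_ (hanti n.le_succ))
    let := padicTop p
    refine IsOpen.mem_nhds ?_ (show y ∈ {z : Np p | _} from ⟨0, rfl⟩)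
    exact isOpen_generateFrom_of_mem ⟨_, n + 1, (y : ℕ+).pos, n.succ_pos, rfl⟩
  · rw [padicTop, nhds_generateFrom]
    refine le_iInf₂ ?_
    rintro _ ⟨hy, x, n, -, -, rfl⟩
    obtain ⟨k, hk⟩ := hy
    refine iInf_le_of_le n (principal_mono.2 ?_)
    rintro z ⟨m, hm⟩
    exact ⟨k + m, by rw [hm, hk]; ring⟩

lemma mem_padicClosure_iff {A : Set ℕ+} {y : ℕ+} :
    y ∈ padicClosure p A ↔
      ¬ p ∣ y ∧ ∀ n : ℕ, ∃ x ∈ A, ¬ p ∣ (x : ℕ) ∧ ∃ k : ℕ, (x : ℕ) = y + p ^ n * k := by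
  let := padicTop p
  constructor
  · rintro ⟨z, hz, rfl⟩
    refine ⟨z.2, fun n => ?_⟩
    obtain ⟨w, hwA, hw⟩ := (mem_closure_iff_nhds_basis (padicTop_nhds_hasBasis z)).1 hz n trivial
    exact ⟨w, hwA, w.2, hw⟩
  · rintro ⟨hy, h⟩
    refine ⟨⟨y, hy⟩, (mem_closure_iff_nhds_basis (padicTop_nhds_hasBasis _)).2 fun n _ => ?_, rfl⟩
    obtain ⟨x, hxA, hx, hxy⟩ := h n
    exact ⟨⟨x, hx⟩, hxA, hxy⟩

lemma exists_le_pow_modEq {a m : ℕ} (ha : 1 < a) (ham : a.Coprime m) (j y : ℕ) :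
    ∃ i : ℕ, 0 < i ∧ y ≤ a ^ i ∧ a ^ i ≡ a ^ j [MOD m] := by
  have hm : m ≠ 0 := by
    rintro rfl
    exact ha.ne' (Nat.coprime_zero_right a |>.1 ham)
  have hφ : 0 < m.totient := Nat.totient_pos.2 hm.pos
  refine ⟨j + m.totient * (y + 1), by positivity, ?_, ?_⟩
  · calc y ≤ j + m.totient * (y + 1) := by nlinarith
      _ ≤ a ^ (j + m.totient * (y + 1)) := (Nat.lt_pow_self ha).le
  · rw [pow_add, pow_mul]
    simpa only [one_pow, mul_one] using
      (Nat.ModEq.refl (a ^ j)).mul ((Nat.ModEq.pow_totient ham).pow (y + 1))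

lemma mem_clPow_iff [Fact p.Prime] {a : ℕ} (ha : ¬ p ∣ a) (ha1 : a ≠ 1) {y : ℕ+} :
    y ∈ clPow p a ↔
      ∀ n : ℕ, ((y : ℕ) : ZMod (p ^ n)) ∈ Submonoid.powers (a : ZMod (p ^ n)) := by
  have hp : p.Prime := Fact.out
  have hpow (j : ℕ) : ¬ p ∣ a ^ j := fun h => ha (hp.dvd_of_dvd_pow h)
  have ha_gt : 1 < a := by
    have : a ≠ 0 := by rintro rfl; exact ha (dvd_zero p)
    omega
  rw [clPow, mem_padicClosure_iff]
  constructor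
  · rintro ⟨-, h⟩ n
    obtain ⟨x, ⟨j, -, hj⟩, -, k, hk⟩ := h n
    refine ⟨j, ?_⟩
    have hcast : ((a ^ j : ℕ) : ZMod (p ^ n)) = ((y + p ^ n * k : ℕ) : ZMod (p ^ n)) := by
      rw [← hj, hk]
    simpa using hcast
  · intro h
    have hmod (n : ℕ) : ∃ j : ℕ, a ^ j ≡ y [MOD p ^ n] := by
      obtain ⟨j, hj⟩ := h n
      exact ⟨j, (ZMod.natCast_eq_natCast_iff _ _ _).1 (by exact_mod_cast hj)⟩
    constructor
    · obtain ⟨j, hj⟩ := hmod 1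
      rw [pow_one] at hj
      exact fun hy => hpow j ((hj.dvd_iff dvd_rfl).2 hy)
    · intro n
      obtain ⟨j, hj⟩ := hmod n
      have hcop : a.Coprime (p ^ n) := ((hp.coprime_iff_not_dvd.2 ha).symm).pow_right n
      obtain ⟨i, hi, hle, hij⟩ := exists_le_pow_modEq ha_gt hcop j y
      obtain ⟨k, hk⟩ := (Nat.modEq_iff_dvd' hle).1 (hij.trans hj).symm
      exact ⟨⟨a ^ i, by positivity⟩, ⟨i, hi, rfl⟩, hpow i, k, by simp only [PNat.mk_coe]; omega⟩

end Closure

section Residues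

lemma ncard_preimage_of_surjective {G H : Type*} [AddGroup G] [AddGroup H] {f : G →+ H}
    (hf : Function.Surjective f) (S : Set H) :
    (f ⁻¹' S).ncard = Nat.card f.ker * S.ncard := by
  let e := QuotientAddGroup.quotientKerEquivOfSurjective f hf
  have hpre : f ⁻¹' S = QuotientAddGroup.mk ⁻¹' (e ⁻¹' S) := rfl
  rw [hpre, ← Nat.card_coe_set_eq,
    Nat.card_congr (QuotientAddGroup.preimageMkEquivAddSubgroupProdSet _ _), Nat.card_prod,
    Nat.card_preimage_of_injective e.injective (by simp [e.surjective.range_eq]),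
    Nat.card_coe_set_eq]

lemma ncard_castHom_preimage {M N : ℕ} [NeZero M] (h : N ∣ M) (S : Set (ZMod N)) :
    (ZMod.castHom h (ZMod N) ⁻¹' S).ncard = M / N * S.ncard := by
  have hN : 0 < N := Nat.pos_of_dvd_of_pos h (NeZero.pos M)
  let f := (ZMod.castHom h (ZMod N)).toAddMonoidHom
  have hf : Function.Surjective f := ZMod.castHom_surjective h
  have hker : Nat.card f.ker * N = M := by
    simpa [AddSubgroup.index_ker, AddMonoidHom.range_eq_top.2 hf] using f.ker.card_mul_index
  rw [Nat.div_eq_of_eq_mul_left hN hker.symm]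
  exact ncard_preimage_of_surjective hf S

lemma ncard_powers {M : Type*} [Monoid M] {x : M} (hx : IsOfFinOrder x) :
    (Submonoid.powers x : Set M).ncard = orderOf x := by
  rw [← Nat.card_coe_set_eq, ← Nat.card_fin (orderOf x)]
  exact (Nat.card_congr (finEquivPowers hx)).symm

lemma powers_eq_pair_of_sq_eq_one {M : Type*} [Monoid M] {x : M} (hx : x ^ 2 = 1) :
    (Submonoid.powers x : Set M) = {1, x} := by
  ext z
  constructor
  · rintro ⟨j, rfl⟩
    rcases Nat.even_or_odd' j with ⟨i, rfl | rfl⟩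
    · left
      simp only [pow_mul, hx, one_pow]
    · right
      simp only [pow_add, pow_mul, hx, one_pow, one_mul, pow_one, Set.mem_singleton_iff]
  · rintro (rfl | rfl)
    · exact one_mem _
    · exact Submonoid.mem_powers _

lemma natCast_pow_self_eq_zero (p K : ℕ) : (p : ZMod (p ^ K)) ^ K = 0 := by
  exact_mod_cast ZMod.natCast_self (p ^ K)

variable {p : ℕ} [Fact p.Prime]

lemma powers_one_add_prime_pow_mul {K : ℕ} (hpK : K + 2 ≤ p * K) {u : ℤ} (hu : ¬ (p : ℤ) ∣ u)
    (n : ℕ) :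
    (Submonoid.powers (1 + p ^ K * u : ZMod (p ^ (n + K))) : Set (ZMod (p ^ (n + K)))) =
      ZMod.castHom (pow_dvd_pow p (Nat.le_add_left K n)) (ZMod (p ^ K)) ⁻¹' {1} := by
  have hp : p.Prime := Fact.out
  have hK : K ≠ 0 := by rintro rfl; omega
  refine Set.eq_of_subset_of_ncard_le ?_ ?_
  · rintro _ ⟨j, rfl⟩
    simp only [Set.mem_preimage, Set.mem_singleton_iff, map_pow, map_add, map_mul, map_one,
      map_natCast, natCast_pow_self_eq_zero, zero_mul, add_zero, one_pow]
  · have horder := ZMod.orderOf_one_add_mul_prime_pow hp K hK hpK u hu n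
    have hfin := orderOf_pos_iff.1 (horder ▸ pow_pos hp.pos n)
    rw [ncard_powers hfin, horder, ncard_castHom_preimage, Set.ncard_singleton, mul_one,
      Nat.pow_div (Nat.le_add_left K n) hp.pos, Nat.add_sub_cancel]

lemma mem_powers_of_castHom_mem_powers {K n : ℕ} (hpK : K + 2 ≤ p * K) {u : ℤ}
    (hu : ¬ (p : ℤ) ∣ u) {a : ZMod (p ^ (n + K))} (ha : IsUnit a) {d : ℕ}
    (had : a ^ d = 1 + p ^ K * u) {y : ZMod (p ^ (n + K))}
    (hy : ZMod.castHom (pow_dvd_pow p (Nat.le_add_left K n)) (ZMod (p ^ K)) y ∈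
      Submonoid.powers (ZMod.castHom (pow_dvd_pow p (Nat.le_add_left K n)) (ZMod (p ^ K)) a)) :
    y ∈ Submonoid.powers a := by
  set π := ZMod.castHom (pow_dvd_pow p (Nat.le_add_left K n)) (ZMod (p ^ K))
  obtain ⟨v, rfl⟩ := ha
  obtain ⟨j, hj : π v ^ j = π y⟩ := hy
  have hquot : π ((v ^ j)⁻¹.val * y) = 1 := by
    rw [map_mul, ← hj, ← map_pow, ← map_mul, ← Units.val_pow_eq_pow_val, Units.inv_mul, map_one]
  have hmem : (v ^ j)⁻¹.val * y ∈ Submonoid.powers (v.val ^ d) := by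
    rw [had, ← SetLike.mem_coe, powers_one_add_prime_pow_mul hpK hu]
    exact hquot
  have hpow (i : ℕ) : v.val ^ i ∈ Submonoid.powers v.val := pow_mem (Submonoid.mem_powers _) i
  rw [← Units.mul_inv_cancel_left (v ^ j) y, Units.val_pow_eq_pow_val]
  exact mul_mem (hpow j) (Submonoid.powers_le.2 (hpow d) hmem)

lemma not_dvd_and_ne_one_of_pow_eq {a d K : ℕ} {u : ℤ} (hK : K ≠ 0)
    (hu : ¬ (p : ℤ) ∣ u) (had : (a : ℤ) ^ d = 1 + p ^ K * u) : ¬ p ∣ a ∧ a ≠ 1 := by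
  have hp : Prime (p : ℤ) := Nat.prime_iff_prime_int.1 Fact.out
  have hne : (a : ℤ) ^ d ≠ 1 := by
    rw [had, Ne, add_eq_left]
    refine mul_ne_zero (pow_ne_zero K hp.ne_zero) ?_
    rintro rfl
    exact hu (dvd_zero _)
  have hd : d ≠ 0 := by
    rintro rfl
    exact hne (pow_zero _)
  constructor
  · intro hpa
    have hdvd : (p : ℤ) ∣ 1 + p ^ K * u :=
      had ▸ dvd_pow (Int.natCast_dvd_natCast.2 hpa) hd
    exact hp.not_dvd_one ((dvd_add_left (dvd_mul_of_dvd_left (dvd_pow_self _ hK) u)).1 hdvd)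
  · rintro rfl
    exact hne (by rw [Nat.cast_one, one_pow])

/-- The preimage in the positive integers of a set of residues modulo `N`: the general form of
the sets `ℕ ∩ π_n⁻¹(S)`. -/
def residuePreimage {N : ℕ} (S : Set (ZMod N)) : Set ℕ+ := {y | ((y : ℕ) : ZMod N) ∈ S}

lemma mem_residuePreimage {N : ℕ} {S : Set (ZMod N)} {y : ℕ+} :
    y ∈ residuePreimage S ↔ ((y : ℕ) : ZMod N) ∈ S :=
  Iff.rfl

lemma clPow_eq_residuePreimage_powers {a d K : ℕ} {u : ℤ} (hpK : K + 2 ≤ p * K)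
    (hu : ¬ (p : ℤ) ∣ u) (had : (a : ℤ) ^ d = 1 + p ^ K * u) :
    clPow p a =
      residuePreimage (Submonoid.powers (a : ZMod (p ^ K)) : Set (ZMod (p ^ K))) := by
  obtain ⟨ha, ha1⟩ := not_dvd_and_ne_one_of_pow_eq (by rintro rfl; omega) hu had
  ext y
  refine (mem_clPow_iff ha ha1).trans ⟨fun h => h K, ?_⟩
  intro hy n
  have hunit : IsUnit (a : ZMod (p ^ (n + K))) :=
    (ZMod.isUnit_iff_coprime _ _).2
      (((Nat.Prime.coprime_iff_not_dvd Fact.out).2 ha).symm.pow_right _)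
  have hbase : (a : ZMod (p ^ (n + K))) ^ d = 1 + p ^ K * u := by
    simpa only [Int.cast_pow, Int.cast_natCast, Int.cast_add, Int.cast_one, Int.cast_mul] using
      congrArg (Int.cast : ℤ → ZMod (p ^ (n + K))) had
  have hylift : ((y : ℕ) : ZMod (p ^ (n + K))) ∈ Submonoid.powers (a : ZMod (p ^ (n + K))) := by
    refine mem_powers_of_castHom_mem_powers hpK hu hunit hbase ?_
    rwa [map_natCast, map_natCast]
  obtain ⟨j, hj⟩ := hylift
  refine ⟨j, ?_⟩
  simpa only [map_pow, map_natCast] using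
    congrArg (ZMod.castHom (pow_dvd_pow p (n.le_add_right K)) (ZMod (p ^ n))) hj

end Residues

section Index

variable {p K : ℕ}

lemma pin_residuePreimage_eq_preimage [NeZero p] {n : ℕ} (hn : K ≤ n) (S : Set (ZMod (p ^ K))) :
    pin p n (residuePreimage S) = ZMod.castHom (pow_dvd_pow p hn) (ZMod (p ^ K)) ⁻¹' S := by
  ext z
  constructor
  · rintro ⟨y, hy, rfl⟩
    simpa only [Set.mem_preimage, map_natCast] using mem_residuePreimage.1 hy
  · intro hz
    have hval : ((z.val + p ^ n : ℕ) : ZMod (p ^ n)) = z := by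
      rw [Nat.cast_add, ZMod.natCast_self, add_zero, ZMod.natCast_zmod_val]
    refine ⟨⟨z.val + p ^ n, Nat.add_pos_right _ (NeZero.pos _)⟩, ?_, hval⟩
    rw [← hval, Set.mem_preimage, map_natCast] at hz
    exact hz

lemma pin_residuePreimage_ncard [NeZero p] {n : ℕ} (hn : K ≤ n) (S : Set (ZMod (p ^ K))) :
    (pin p n (residuePreimage S)).ncard = p ^ (n - K) * S.ncard := by
  rw [pin_residuePreimage_eq_preimage hn, ncard_castHom_preimage,
    Nat.pow_div hn (NeZero.pos p)]

lemma pin_residuePreimage_ncard_le [NeZero p] {n : ℕ} (hn : n ≤ K) (S : Set (ZMod (p ^ K))) :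
    (pin p n (residuePreimage S)).ncard ≤ S.ncard := by
  have hsub : pin p n (residuePreimage S) ⊆
      ZMod.castHom (pow_dvd_pow p hn) (ZMod (p ^ n)) '' S := by
    rintro _ ⟨y, hy, rfl⟩
    exact ⟨_, hy, map_natCast _ _⟩
  exact (Set.ncard_le_ncard hsub).trans Set.ncard_image_le

lemma residuePreimage_pin_residuePreimage [NeZero p] {n : ℕ} (hn : K ≤ n)
    (S : Set (ZMod (p ^ K))) :
    residuePreimage (pin p n (residuePreimage S)) = residuePreimage S := by
  ext y
  rw [pin_residuePreimage_eq_preimage hn]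
  simp only [mem_residuePreimage, Set.mem_preimage, map_natCast]

lemma le_nX_residuePreimage (hp : 2 ≤ p) {S : Set (ZMod (p ^ K))} (hS : S.Nonempty)
    (hcard : S.ncard < max p 3) : K ≤ nX p (residuePreimage S) := by
  have : NeZero p := ⟨by omega⟩
  have hlevel : max p 3 ≤ (pin p (K + 2) (residuePreimage S)).ncard := by
    rw [pin_residuePreimage_ncard (by omega), Nat.add_sub_cancel_left]
    calc max p 3 ≤ p ^ 2 := max_le (by nlinarith) (by nlinarith)
      _ ≤ p ^ 2 * S.ncard := Nat.le_mul_of_pos_right _ (hS.ncard_pos)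
  obtain ⟨-, -, hmin⟩ := Nat.sInf_mem (s := {n : ℕ | 0 < n ∧
      residuePreimage S = residuePreimage (pin p n (residuePreimage S)) ∧
      max p 3 ≤ (pin p n (residuePreimage S)).ncard})
    ⟨K + 2, by omega, (residuePreimage_pin_residuePreimage (by omega) S).symm, hlevel⟩
  by_contra! hlt
  exact (hcard.trans_le hmin).not_ge (pin_residuePreimage_ncard_le hlt.le S)

lemma iX_residuePreimage [Fact p.Prime] (hK : K ≠ 0) {S : Set (ZMod (p ^ K))} (hS : S.Nonempty)
    (hcard : S.ncard < max p 3) : iX p (residuePreimage S) = (p ^ K).totient / S.ncard := by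
  have hp : p.Prime := Fact.out
  have hn := le_nX_residuePreimage hp.two_le hS hcard
  rw [iX, pin_residuePreimage_ncard hn, Nat.card_eq_fintype_card, ZMod.card_units_eq_totient]
  generalize nX p (residuePreimage S) = n at hn
  obtain ⟨m, rfl⟩ := Nat.exists_eq_add_of_le hn
  have htotient : (p ^ (K + m)).totient = p ^ m * (p ^ K).totient := by
    rw [Nat.totient_prime_pow hp (by omega), Nat.totient_prime_pow hp (by omega),
      show K + m - 1 = m + (K - 1) by omega, pow_add, mul_assoc]
  rw [htotient, Nat.add_sub_cancel_left, Nat.mul_div_mul_left _ _ (pow_pos hp.pos m)]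

end Index

section SignedClass

variable {ε δ : ℤˣ} {j k : ℕ}

lemma four_dvd_two_pow (hk : 2 ≤ k) : (4 : ℤ) ∣ 2 ^ k := by
  simpa using pow_dvd_pow (2 : ℤ) hk

lemma eq_of_four_dvd_sub (h : (4 : ℤ) ∣ (ε : ℤ) - δ) : ε = δ := by
  rcases Int.units_eq_one_or ε with rfl | rfl <;> rcases Int.units_eq_one_or δ with rfl | rfl <;>
    first | rfl | norm_num at h

lemma two_pow_succ_dvd_sign_add_sub_one_iff (hj : 1 ≤ j) (hk : 2 ≤ k) :
    (2 : ℤ) ^ (j + 1) ∣ ε + 2 ^ k - 1 ↔ ε = 1 ∧ j < k := by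
  constructor
  · intro h
    have h4 : (4 : ℤ) ∣ ε + 2 ^ k - 1 := (four_dvd_two_pow (by omega)).trans h
    obtain rfl : ε = 1 := eq_of_four_dvd_sub (by
      have := four_dvd_two_pow hk
      rw [Units.val_one]
      omega)
    rw [Units.val_one, add_sub_cancel_left, pow_dvd_pow_iff two_ne_zero (by decide)] at h
    exact ⟨rfl, h⟩
  · rintro ⟨rfl, hjk⟩
    simpa using pow_dvd_pow (2 : ℤ) hjk

lemma eq_of_two_pow_succ_dvd_sub (h : (2 : ℤ) ^ (j + 1) ∣ 2 ^ k - 2 ^ j) : k = j := by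
  have hle {m n : ℕ} : (2 : ℤ) ^ m ∣ 2 ^ n ↔ m ≤ n := pow_dvd_pow_iff two_ne_zero (by decide)
  have hjk : j ≤ k :=
    hle.1 ((dvd_sub_left dvd_rfl).1 ((pow_dvd_pow 2 j.le_succ).trans h))
  by_contra hne
  have hlt : (2 : ℤ) ^ (j + 1) ∣ 2 ^ k := hle.2 (by omega)
  exact j.lt_irrefl (hle.1 ((dvd_sub_right hlt).1 h))

lemma two_pow_succ_dvd_sign_add_sub_iff (hj : 2 ≤ j) (hk : 2 ≤ k) :
    (2 : ℤ) ^ (j + 1) ∣ ε + 2 ^ k - (δ + 2 ^ j) ↔ ε = δ ∧ k = j := by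
  constructor
  · intro h
    have h4 := (four_dvd_two_pow (by omega)).trans h
    obtain rfl : ε = δ := eq_of_four_dvd_sub (by
      have := four_dvd_two_pow hj
      have := four_dvd_two_pow hk
      omega)
    exact ⟨rfl, eq_of_two_pow_succ_dvd_sub (by rwa [add_sub_add_left_eq_sub] at h)⟩
  · rintro ⟨rfl, rfl⟩
    simp

lemma exists_odd_sq_eq_one_add_two_pow_mul {x u : ℤ} (hk : 2 ≤ k) (hu : Odd u)
    (hx : x = ε + 2 ^ k * u) : ∃ v : ℤ, Odd v ∧ x ^ 2 = 1 + 2 ^ (k + 1) * v := by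
  obtain ⟨l, rfl⟩ : ∃ l, k = l + 2 := ⟨k - 2, by omega⟩
  have hεodd : Odd (ε : ℤ) := by
    rcases Int.units_eq_one_or ε with rfl | rfl <;> decide
  have hεsq : (ε : ℤ) ^ 2 = 1 := by rw [← Units.val_pow_eq_pow_val, Int.units_sq, Units.val_one]
  refine ⟨ε * u + 2 ^ (l + 1) * u ^ 2, ?_, ?_⟩
  · exact (hεodd.mul hu).add_even ((even_two.pow_of_ne_zero l.succ_ne_zero).mul_right _)
  · rw [hx]
    linear_combination hεsq

lemma intCast_add_two_pow_mul_odd {c u : ℤ} (hu : Odd u) :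
    ((c + 2 ^ k * u : ℤ) : ZMod (2 ^ (k + 1))) = c + 2 ^ k := by
  obtain ⟨w, rfl⟩ := hu
  push_cast
  linear_combination (w : ZMod (2 ^ (k + 1))) * natCast_pow_self_eq_zero 2 (k + 1)

lemma exists_eq_sign_add_two_pow_mul {x : ℤ} (hx : Odd x) (h1 : x ≠ 1) (hneg1 : x ≠ -1) :
    ∃ (ε : ℤˣ) (k : ℕ) (u : ℤ), 2 ≤ k ∧ Odd u ∧ x = ε + 2 ^ k * u := by
  obtain ⟨ε, hε⟩ : ∃ ε : ℤˣ, (4 : ℤ) ∣ x - ε := by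
    obtain ⟨w, rfl⟩ := hx
    rcases Int.even_or_odd' w with ⟨v, rfl | rfl⟩
    · exact ⟨1, v, by rw [Units.val_one]; ring⟩
    · exact ⟨-1, v + 1, by rw [Units.val_neg, Units.val_one]; ring⟩
  have hne : x - ε ≠ 0 := by
    rcases Int.units_eq_one_or ε with rfl | rfl
    · exact sub_ne_zero.2 h1
    · exact sub_ne_zero.2 hneg1
  have hfin : FiniteMultiplicity (2 : ℤ) (x - ε) := Int.finiteMultiplicity_iff.2 ⟨by decide, hne⟩
  obtain ⟨u, hxu, hu⟩ := hfin.exists_eq_pow_mul_and_not_dvd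
  refine ⟨ε, multiplicity 2 (x - ε), u, ?_, ?_, ?_⟩
  · exact hfin.le_multiplicity_of_pow_dvd hε
  · rwa [← Int.not_even_iff_odd, even_iff_two_dvd]
  · rw [← hxu]; ring

/-- The closure of `a^ℕ` for every odd `a ≡ ε + 2^k` modulo `2^(k+1)`, where `ε = ±1` and `k ≥ 2`:
the sign and the exponent are the two parameters of the members of `𝒳_2`. -/
def signedClass (ε : ℤˣ) (k : ℕ) : Set ℕ+ :=
  residuePreimage ({1, ((ε : ℤ) : ZMod (2 ^ (k + 1))) + 2 ^ k} : Set (ZMod (2 ^ (k + 1))))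

lemma mem_signedClass_iff {y : ℕ+} : y ∈ signedClass ε k ↔
    (2 : ℤ) ^ (k + 1) ∣ (y : ℕ) - 1 ∨ (2 : ℤ) ^ (k + 1) ∣ (y : ℕ) - (ε + 2 ^ k) := by
  have hcongr (c : ℤ) :
      ((y : ℕ) : ZMod (2 ^ (k + 1))) = c ↔ (2 : ℤ) ^ (k + 1) ∣ (y : ℕ) - c := by
    rw [eq_comm, ← Int.cast_natCast, ZMod.intCast_eq_intCast_iff_dvd_sub]
    push_cast
    rfl
  have h1 := hcongr 1
  have h2 := hcongr (ε + 2 ^ k)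
  push_cast at h1 h2
  rw [← h1, ← h2]
  rfl

lemma clPow_two_eq_signedClass {a : ℕ} {u : ℤ} (hk : 2 ≤ k) (hu : Odd u)
    (hau : (a : ℤ) = ε + 2 ^ k * u) : clPow 2 a = signedClass ε k := by
  obtain ⟨v, hv, hsq⟩ := exists_odd_sq_eq_one_add_two_pow_mul hk hu hau
  have hres : (a : ZMod (2 ^ (k + 1))) = (ε : ℤ) + 2 ^ k := by
    rw [← Int.cast_natCast, hau, intCast_add_two_pow_mul_odd hu]
  have hres_sq : (a : ZMod (2 ^ (k + 1))) ^ 2 = 1 := by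
    have hzero : (2 : ZMod (2 ^ (k + 1))) ^ (k + 1) = 0 := natCast_pow_self_eq_zero 2 (k + 1)
    simpa [hzero] using congrArg (Int.cast : ℤ → ZMod (2 ^ (k + 1))) hsq
  have hv2 : ¬ ((2 : ℕ) : ℤ) ∣ v := by
    rwa [Nat.cast_ofNat, ← even_iff_two_dvd, Int.not_even_iff_odd]
  rw [clPow_eq_residuePreimage_powers (by omega) hv2 hsq,
    powers_eq_pair_of_sq_eq_one hres_sq, hres, signedClass]

lemma exists_eq_signedClass {X : Set ℕ+} (hX : X ∈ XX 2) :
    ∃ (ε : ℤˣ) (k : ℕ), 2 ≤ k ∧ X = signedClass ε k := by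
  obtain ⟨a, -, ha1, ha, rfl⟩ := hX
  obtain ⟨ε, k, u, hk, hu, hau⟩ :=
    exists_eq_sign_add_two_pow_mul (x := a) (by rw [Int.odd_iff]; omega) (by omega) (by omega)
  exact ⟨ε, k, hk, clPow_two_eq_signedClass hk hu hau⟩

lemma iX_signedClass (hk : 2 ≤ k) : iX 2 (signedClass ε k) = 2 ^ (k - 1) := by
  have hne : (1 : ZMod (2 ^ (k + 1))) ≠ (ε : ℤ) + 2 ^ k := by
    intro h
    have hdvd : (2 : ℤ) ^ (k + 1) ∣ ε + 2 ^ k - 1 := by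
      have := (ZMod.intCast_eq_intCast_iff_dvd_sub 1 (ε + 2 ^ k : ℤ) (2 ^ (k + 1))).1
        (by exact_mod_cast h)
      exact_mod_cast this
    exact k.lt_irrefl ((two_pow_succ_dvd_sign_add_sub_one_iff (by omega) hk).1 hdvd).2
  have hcard := Set.ncard_pair hne
  calc iX 2 (signedClass ε k) = (2 ^ (k + 1)).totient / 2 := by
        rw [signedClass, iX_residuePreimage k.succ_ne_zero (Set.insert_nonempty _ _)
          (by rw [hcard]; decide), hcard]
    _ = 2 ^ k / 2 ^ 1 := by
        rw [Nat.totient_prime_pow_succ Nat.prime_two, Nat.add_one_sub_one, mul_one, pow_one]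
    _ = 2 ^ (k - 1) := Nat.pow_div (by omega) two_pos

lemma exists_mem_signedClass_eq (hk : 2 ≤ k) (ε : ℤˣ) :
    ∃ y ∈ signedClass ε k, ((y : ℕ) : ℤ) = ε + 2 ^ k := by
  have hpos : 0 < (ε : ℤ) + 2 ^ k := by
    have h4 : (4 : ℤ) ≤ 2 ^ k := Int.le_of_dvd (by positivity) (four_dvd_two_pow hk)
    rcases Int.units_eq_one_or ε with rfl | rfl
    · rw [Units.val_one]; omega
    · rw [Units.val_neg, Units.val_one]; omega
  obtain ⟨y, hy⟩ := Int.eq_ofNat_of_zero_le hpos.le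
  refine ⟨⟨y, by omega⟩, mem_signedClass_iff.2 (Or.inr ?_), hy.symm⟩
  simp [← hy]

lemma signedClass_subset_iff (hk : 2 ≤ k) (hj : 2 ≤ j) :
    signedClass ε k ⊆ signedClass δ j ↔ (ε = 1 ∧ j < k) ∨ (ε = δ ∧ k = j) := by
  constructor
  · intro h
    obtain ⟨y, hy, hyval⟩ := exists_mem_signedClass_eq hk ε
    have hmem := mem_signedClass_iff.1 (h hy)
    rwa [hyval, two_pow_succ_dvd_sign_add_sub_one_iff (by omega) hk,
      two_pow_succ_dvd_sign_add_sub_iff hj hk] at hmem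
  · rintro (⟨rfl, hjk⟩ | ⟨rfl, rfl⟩)
    · intro y hy
      have hy1 : (2 : ℤ) ^ k ∣ (y : ℕ) - 1 := by
        rcases mem_signedClass_iff.1 hy with h | h
        · exact (pow_dvd_pow 2 k.le_succ).trans h
        · have := dvd_add ((pow_dvd_pow 2 k.le_succ).trans h) (dvd_refl ((2 : ℤ) ^ k))
          rwa [Units.val_one, sub_add_eq_sub_sub, sub_add_cancel] at this
      exact mem_signedClass_iff.2 (Or.inl ((pow_dvd_pow 2 hjk).trans hy1))
    · exact subset_rfl

lemma golombBasic_one_four_eq_signedClass : golombBasic 1 4 = signedClass 1 2 := by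
  ext y
  rw [mem_signedClass_iff, Units.val_one]
  constructor
  · rintro ⟨n, hn⟩
    omega
  · intro h
    have := y.pos
    exact ⟨((y : ℕ) - 1) / 4, by omega⟩

lemma signedClass_subset_golombBasic_iff (hk : 2 ≤ k) :
    signedClass ε k ⊆ golombBasic 1 4 ↔ ε = 1 := by
  rw [golombBasic_one_four_eq_signedClass, signedClass_subset_iff hk le_rfl, ← and_or_left,
    and_iff_left (by omega)]

end SignedClass

/-- For distinct `X, Y ∈ 𝒳_2`, the strict inclusion `X ⊂ Y` holds iff `X ⊆ 1 + 4ℕ₀`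
and `i(Y) < i(X)`. -/
theorem XX_two_ssubset_iff (X Y : Set ℕ+) (hX : X ∈ XX 2) (hY : Y ∈ XX 2) (hne : X ≠ Y) :
    X ⊂ Y ↔ X ⊆ golombBasic 1 4 ∧ iX 2 Y < iX 2 X := by
  obtain ⟨ε, k, hk, rfl⟩ := exists_eq_signedClass hX
  obtain ⟨δ, j, hj, rfl⟩ := exists_eq_signedClass hY
  have hparam : ¬ (ε = δ ∧ k = j) := by
    rintro ⟨rfl, rfl⟩
    exact hne rfl
  have hexp : 2 ^ (j - 1) < 2 ^ (k - 1) ↔ j < k := by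
    rw [Nat.pow_lt_pow_iff_right one_lt_two]
    omega
  rw [Set.ssubset_iff_subset_ne, and_iff_left hne, signedClass_subset_iff hk hj,
    or_iff_left hparam, signedClass_subset_golombBasic_iff hk, iX_signedClass hj,
    iX_signedClass hk, hexp]
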